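/- Fix n ≥ 2, t ∈ ℝ, and a function d ↦ r₀(d) > 0 with lim_{d→∞} (r₀(d)² − d/12)/√d = t. For each d, let X₁, …, X_n be i.i.d. uniform random points in [0,1]^d with torus distance ρ_T, and let G_d be the random graph on vertices {1,…,n} with an edge between i and j exactly when ρ_T(X_i, X_j) ≤ r₀(d). Then for every labelled graph g on n vertices with k edges, P(G_d = g) → p̄(t)^k (1 − p̄(t))^{n(n−1)/2 − k} as d → ∞, where p̄(t) = P(W ≤ t) for W a centered Gaussian random variable of variance 1/180. In other words, the hard random geometric graph ensemble on 𝕋^d with uniform nodes converges in distribution to the Erdős–Rényi ensemble G(n, p̄(t)). -/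

import Mathlib

open MeasureTheory ProbabilityTheory Filter Topology

/-- The uniform probability measure on `[0,1]`. -/
noncomputable def unif01 : Measure ℝ := volume.restrict (Set.Icc (0:ℝ) 1)

/-- The law of `n` i.i.d. uniform random points in `[0,1]^d`. -/
noncomputable def cubeLaw (n d : ℕ) : Measure (Fin n → Fin d → ℝ) :=
  Measure.pi fun _ => Measure.pi fun _ => unif01

/-- The distance on the `d`-dimensional unit torus. -/
noncomputable def torusDist (d : ℕ) (x y : Fin d → ℝ) : ℝ :=
  Real.sqrt (∑ k : Fin d, (min |x k - y k| (1 - |x k - y k|)) ^ 2)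

/-- `p̄(t) = P(W ≤ t)` for `W` a centered Gaussian of variance `1/180`. -/
noncomputable def pbar (t : ℝ) : ℝ :=
  (gaussianReal 0 (1/180 : NNReal) (Set.Iic t)).toReal


instance unif01_prob : IsProbabilityMeasure unif01 := by
  constructor
  simp [unif01]

lemma map_update_pi {n : ℕ} (i : Fin n) :
    ((Measure.pi fun _ : Fin n => unif01).prod unif01).map
      (fun p => Function.update p.1 i p.2) = Measure.pi fun _ : Fin n => unif01 := by
  symm
  apply Measure.pi_eq
  intro s hs
  have hm : Measurable (fun p : (Fin n → ℝ) × ℝ => Function.update p.1 i p.2) := by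
    rw [measurable_pi_iff]
    intro j
    by_cases h : j = i
    · subst h; simpa using measurable_snd
    · simp only [Function.update_of_ne h]; fun_prop
  rw [Measure.map_apply hm (MeasurableSet.univ_pi hs)]
  have : (fun p : (Fin n → ℝ) × ℝ => Function.update p.1 i p.2) ⁻¹' (Set.univ.pi s)
      = (Set.univ.pi (Function.update s i Set.univ)) ×ˢ (s i) := by
    ext ⟨x, y⟩
    simp only [Set.mem_preimage, Set.mem_pi, Set.mem_univ, true_imp_iff, Set.mem_prod]
    constructor
    · intro h
      refine ⟨fun j => ?_, by simpa using h i⟩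
      by_cases hj : j = i
      · subst hj; simp
      · simpa [Function.update_of_ne hj] using h j
    · rintro ⟨h1, h2⟩ j
      by_cases hj : j = i
      · subst hj; simpa using h2
      · simpa [Function.update_of_ne hj] using h1 j
  rw [this, Measure.prod_prod, Measure.pi_pi]
  rw [← Finset.mul_prod_erase _ _ (Finset.mem_univ i),
    ← Finset.mul_prod_erase (a := i) (f := fun i => unif01 (s i)) _ (Finset.mem_univ i)]
  simp only [Function.update_self, measure_univ, one_mul]
  rw [mul_comm]
  congr 1
  apply Finset.prod_congr rfl
  intro j hj
  rw [Function.update_of_ne (Finset.ne_of_mem_erase hj)]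

lemma transpose_cubeLaw (n d : ℕ) :
    (cubeLaw n d).map (fun ω k i => ω i k) =
      Measure.pi fun _ : Fin d => Measure.pi fun _ : Fin n => unif01 := by
  symm
  refine Measure.pi_eq_generateFrom
    (C := fun _ => Set.univ.pi '' Set.univ.pi fun _ => {s : Set ℝ | MeasurableSet s})
    (fun _ => generateFrom_pi) (fun _ => isPiSystem_pi) (fun _ => ?_) ?_
  · refine ⟨fun _ => Set.univ, fun _ => ⟨fun _ => Set.univ, ?_, ?_⟩, ?_, ?_⟩
    · simp
    · simp
    · simp
    · simp [Set.iUnion_const]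
  · intro s hs
    choose r hr1 hr2 using hs
    have hs' : s = fun k => Set.univ.pi (r k) := by
      funext k; exact (hr2 k).symm
    have hr : ∀ k i, MeasurableSet (r k i) := fun k i => hr1 k i (Set.mem_univ _)
    subst hs'
    rw [Measure.map_apply (by fun_prop)
      (MeasurableSet.univ_pi fun k => MeasurableSet.univ_pi (hr k))]
    have : (fun (ω : Fin n → Fin d → ℝ) k i => ω i k) ⁻¹' (Set.univ.pi fun k => Set.univ.pi (r k))
        = Set.univ.pi fun i => Set.univ.pi fun k => r k i := by
      ext ω
      simp only [Set.mem_preimage, Set.mem_pi, Set.mem_univ, true_imp_iff]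
      exact forall_comm
    rw [this, cubeLaw]
    simp only [Measure.pi_pi]
    exact Finset.prod_comm

lemma min_eq_round (z : ℝ) (hz : |z| ≤ 1) : min |z| (1 - |z|) = |z - round z| := by
  rw [abs_sub_round_eq_min]
  rw [abs_le] at hz
  rcases lt_or_ge z 0 with h | h
  · rcases eq_or_lt_of_le hz.1 with h1 | h1
    · rw [← h1]; norm_num
    · have : Int.fract z = z + 1 := by
        rw [Int.fract_eq_iff]
        exact ⟨by linarith, by linarith, -1, by push_cast; ring⟩
      rw [this, abs_of_neg h, min_comm]
      congr 1 <;> ring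
  · rcases eq_or_lt_of_le hz.2 with h1 | h1
    · rw [h1]; norm_num
    · have : Int.fract z = z := by
        rw [Int.fract_eq_self]; exact ⟨h, h1⟩
      rw [this, abs_of_nonneg h]

lemma int_unif (K : ℝ → ℝ) (a : ℝ) (ha : a ∈ Set.Icc (0:ℝ) 1) :
    ∫ y, K (min |y - a| (1 - |y - a|)) ∂unif01 = ∫ x in (-(1/2) : ℝ)..(1/2), K |x| := by
  have h1 : ∫ y, K (min |y - a| (1 - |y - a|)) ∂unif01
      = ∫ y in (0:ℝ)..1, K |(y - a) - round (y - a)| := by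
    rw [unif01, integral_Icc_eq_integral_Ioc, intervalIntegral.integral_of_le zero_le_one]
    apply setIntegral_congr_fun measurableSet_Ioc
    intro y hy
    simp only
    rw [min_eq_round]
    rw [abs_le]
    exact ⟨by linarith [hy.1, ha.2], by linarith [hy.2, ha.1]⟩
  have hp : Function.Periodic (fun x : ℝ => K |x - round x|) 1 := by
    intro x
    have : round (x + 1) = round x + 1 := by simpa using round_add_intCast x 1
    simp only [this]
    push_cast
    congr 2
    ring
  rw [h1, intervalIntegral.integral_comp_sub_right (fun x : ℝ => K |x - round x|)]
  have h2 := hp.intervalIntegral_add_eq (0 - a) (-(1/2))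
  rw [show (0 - a + 1 : ℝ) = 1 - a by ring, show (-(1/2) + 1 : ℝ) = 1/2 by norm_num] at h2
  rw [h2]
  rw [intervalIntegral.integral_of_le (by norm_num), intervalIntegral.integral_of_le (by norm_num),
    integral_Ioc_eq_integral_Ioo, integral_Ioc_eq_integral_Ioo]
  apply setIntegral_congr_fun measurableSet_Ioo
  intro y hy
  simp only
  have : round y = 0 := by
    rw [round_eq_zero_iff]
    exact ⟨by linarith [hy.1], hy.2⟩
  simp [this]

lemma int_one (a : ℝ) (ha : a ∈ Set.Icc (0:ℝ) 1) :
    ∫ y, ((min |y - a| (1 - |y - a|)) ^ 2 - 1 / 12) ∂unif01 = 0 := by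
  rw [int_unif (fun x => x ^ 2 - 1 / 12) a ha]
  simp only [sq_abs]
  rw [intervalIntegral.integral_sub (by apply Continuous.intervalIntegrable; fun_prop) (by apply Continuous.intervalIntegrable; fun_prop)]
  rw [integral_pow]
  norm_num

lemma int_two (a : ℝ) (ha : a ∈ Set.Icc (0:ℝ) 1) :
    ∫ y, ((min |y - a| (1 - |y - a|)) ^ 2 - 1 / 12) *
      ((min |y - a| (1 - |y - a|)) ^ 2 - 1 / 12) ∂unif01 = 1 / 180 := by
  rw [int_unif (fun x => (x ^ 2 - 1 / 12) * (x ^ 2 - 1 / 12)) a ha]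
  simp only [sq_abs]
  have : ∀ x : ℝ, (x ^ 2 - 1 / 12) * (x ^ 2 - 1 / 12) = x ^ 4 - (1/6) * x ^ 2 + 1/144 := by
    intro x; ring
  simp only [this]
  rw [intervalIntegral.integral_add (by apply Continuous.intervalIntegrable; fun_prop) (by apply Continuous.intervalIntegrable; fun_prop),
    intervalIntegral.integral_sub (by apply Continuous.intervalIntegrable; fun_prop)
      (by apply Continuous.intervalIntegrable; fun_prop),
    intervalIntegral.integral_const_mul]
  rw [integral_pow, integral_pow]
  norm_num

noncomputable def Zc (x y : ℝ) : ℝ := (min |x - y| (1 - |x - y|)) ^ 2 - 1 / 12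

lemma Zc_comm (x y : ℝ) : Zc x y = Zc y x := by
  unfold Zc; rw [abs_sub_comm]

lemma Zc_meas {α : Type*} [MeasurableSpace α] {f g : α → ℝ} (hf : Measurable f)
    (hg : Measurable g) : Measurable (fun a => Zc (f a) (g a)) := by
  unfold Zc
  have : Measurable fun a => |f a - g a| := by
    simpa [Real.norm_eq_abs] using (hf.sub hg).norm
  fun_prop

lemma Zc_bound (x y : ℝ) (hx : x ∈ Set.Icc (0:ℝ) 1) (hy : y ∈ Set.Icc (0:ℝ) 1) :
    |Zc x y| ≤ 1 := by
  have h0 : |x - y| ≤ 1 := by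
    rw [abs_le]; exact ⟨by linarith [hx.1, hy.2], by linarith [hx.2, hy.1]⟩
  have h1 : 0 ≤ min |x - y| (1 - |x - y|) := le_min (abs_nonneg _) (by linarith)
  have h2 : min |x - y| (1 - |x - y|) ≤ 1 := (min_le_left _ _).trans h0
  unfold Zc
  rw [abs_le]
  constructor <;> nlinarith

lemma ae_unif : ∀ᵐ y ∂unif01, y ∈ Set.Icc (0:ℝ) 1 := by
  unfold unif01
  exact ae_restrict_mem measurableSet_Icc

noncomputable def cube1 (n : ℕ) : Measure (Fin n → ℝ) := Measure.pi fun _ : Fin n => unif01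

instance cube1_prob (n : ℕ) : IsProbabilityMeasure (cube1 n) := by
  unfold cube1; infer_instance

lemma ae_cube (n : ℕ) : ∀ᵐ u ∂(cube1 n), ∀ i, u i ∈ Set.Icc (0:ℝ) 1 := by
  rw [ae_all_iff]
  intro i
  have := (measurePreserving_eval (fun _ : Fin n => unif01) i).quasiMeasurePreserving.ae ae_unif
  exact this

lemma int_Z {n : ℕ} (i j : Fin n) : Integrable (fun u => Zc (u i) (u j)) (cube1 n) := by
  refine Integrable.of_bound (C := 1)
    (Zc_meas (measurable_pi_apply i) (measurable_pi_apply j)).aestronglyMeasurable ?_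
  filter_upwards [ae_cube n] with u hu
  exact Zc_bound _ _ (hu i) (hu j)

lemma int_ZZ {n : ℕ} (i j a b : Fin n) :
    Integrable (fun u => Zc (u i) (u j) * Zc (u a) (u b)) (cube1 n) := by
  refine Integrable.of_bound (C := 1)
    ((Zc_meas (measurable_pi_apply i) (measurable_pi_apply j)).mul
    (Zc_meas (measurable_pi_apply a) (measurable_pi_apply b))).aestronglyMeasurable ?_
  filter_upwards [ae_cube n] with u hu
  rw [Real.norm_eq_abs, abs_mul]
  exact mul_le_one₀ (Zc_bound _ _ (hu i) (hu j)) (abs_nonneg _) (Zc_bound _ _ (hu a) (hu b))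

lemma fubini_update {n : ℕ} (i : Fin n) (F : (Fin n → ℝ) → ℝ) (hF : Integrable F (cube1 n)) :
    ∫ u, F u ∂(cube1 n) = ∫ x, ∫ y, F (Function.update x i y) ∂unif01 ∂(cube1 n) := by
  have hm : Measurable (fun p : (Fin n → ℝ) × ℝ => Function.update p.1 i p.2) := by
    rw [measurable_pi_iff]
    intro j
    by_cases h : j = i
    · subst h; simpa using measurable_snd
    · simp only [Function.update_of_ne h]; fun_prop
  have h := map_update_pi i
  change ((cube1 n).prod unif01).map _ = cube1 n at h
  have hF' := hF
  rw [← h] at hF'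
  have h1 := hF'.comp_measurable hm
  calc ∫ u, F u ∂(cube1 n) = ∫ u, F u ∂(((cube1 n).prod unif01).map
      (fun p => Function.update p.1 i p.2)) := by rw [h]
    _ = ∫ p, F (Function.update p.1 i p.2) ∂((cube1 n).prod unif01) :=
        integral_map hm.aemeasurable hF'.aestronglyMeasurable
    _ = _ := integral_prod _ h1

lemma mean_Z {n : ℕ} (i j : Fin n) (hij : i ≠ j) : ∫ u, Zc (u i) (u j) ∂(cube1 n) = 0 := by
  rw [fubini_update i _ (int_Z i j)]
  rw [← integral_zero (Fin n → ℝ) ℝ (μ := cube1 n)]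
  apply integral_congr_ae
  filter_upwards [ae_cube n] with u hu
  simp only [Function.update_self, Function.update_of_ne hij.symm]
  exact int_one _ (hu j)

lemma sq_Z {n : ℕ} (i j : Fin n) (hij : i ≠ j) :
    ∫ u, Zc (u i) (u j) * Zc (u i) (u j) ∂(cube1 n) = 1 / 180 := by
  rw [fubini_update i _ (int_ZZ i j i j)]
  have : ∫ _u, (1 / 180 : ℝ) ∂(cube1 n) = 1 / 180 := by simp
  rw [← this]
  apply integral_congr_ae
  filter_upwards [ae_cube n] with u hu
  simp only [Function.update_self, Function.update_of_ne hij.symm]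
  exact int_two _ (hu j)

lemma cross_Z {n : ℕ} (i j a b : Fin n) (hij : i ≠ j) (hia : i ≠ a) (hib : i ≠ b) :
    ∫ u, Zc (u i) (u j) * Zc (u a) (u b) ∂(cube1 n) = 0 := by
  rw [fubini_update i _ (int_ZZ i j a b)]
  rw [← integral_zero (Fin n → ℝ) ℝ (μ := cube1 n)]
  apply integral_congr_ae
  filter_upwards [ae_cube n] with u hu
  simp only [Function.update_self, Function.update_of_ne hij.symm, Function.update_of_ne hia.symm,
    Function.update_of_ne hib.symm]
  rw [integral_mul_const]
  have := int_one _ (hu j)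
  unfold Zc
  rw [this, zero_mul]

abbrev Pr (n : ℕ) := {p : Fin n × Fin n // p.1 < p.2}

noncomputable def Ze {n : ℕ} (e : Pr n) (u : Fin n → ℝ) : ℝ := Zc (u e.1.1) (u e.1.2)

lemma Ze_meas {n : ℕ} (e : Pr n) : Measurable (Ze e) :=
  Zc_meas (measurable_pi_apply _) (measurable_pi_apply _)

lemma int_Ze {n : ℕ} (e : Pr n) : Integrable (Ze e) (cube1 n) := int_Z _ _

lemma int_ZZe {n : ℕ} (e f : Pr n) : Integrable (fun u => Ze e u * Ze f u) (cube1 n) :=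
  int_ZZ _ _ _ _

lemma cov_Z {n : ℕ} (e f : Pr n) :
    ∫ u, Ze e u * Ze f u ∂(cube1 n) = if e = f then 1 / 180 else 0 := by
  split_ifs with h
  · subst h
    exact sq_Z _ _ e.2.ne
  · obtain ⟨⟨i, j⟩, hij⟩ := e
    obtain ⟨⟨a, b⟩, hab⟩ := f
    simp only [Subtype.mk.injEq, Prod.mk.injEq] at h hij hab
    simp only [Ze]
    by_cases hi : i ≠ a ∧ i ≠ b
    · exact cross_Z i j a b hij.ne hi.1 hi.2
    · have hj : j ≠ a ∧ j ≠ b := by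
        constructor
        · rintro rfl
          exact hi ⟨hij.ne, (hij.trans hab).ne⟩
        · rintro rfl
          refine hi ⟨fun h' => h ⟨h', rfl⟩, hij.ne⟩
      have := cross_Z j i a b hij.ne' hj.1 hj.2
      rw [← this]
      congr 1
      funext u
      rw [Zc_comm (u i)]

noncomputable def Ys {n : ℕ} (s : Pr n → ℝ) (u : Fin n → ℝ) : ℝ := ∑ e, s e * Ze e u

lemma Ys_meas {n : ℕ} (s : Pr n → ℝ) : Measurable (Ys s) :=
  Finset.measurable_sum _ fun e _ => (Ze_meas e).const_mul _

lemma mean_Y {n : ℕ} (s : Pr n → ℝ) : ∫ u, Ys s u ∂(cube1 n) = 0 := by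
  unfold Ys
  rw [integral_finsetSum _ fun e _ => (int_Ze e).const_mul _]
  apply Finset.sum_eq_zero
  intro e _
  rw [integral_const_mul]
  simp only [Ze]
  rw [mean_Z _ _ e.2.ne, mul_zero]

lemma sq_Y {n : ℕ} (s : Pr n → ℝ) :
    ∫ u, Ys s u ^ 2 ∂(cube1 n) = (∑ e, s e ^ 2) / 180 := by
  have h : ∀ u, Ys s u ^ 2 = ∑ e, ∑ f, (s e * s f) * (Ze e u * Ze f u) := by
    intro u
    rw [Ys, sq, Finset.sum_mul_sum]
    refine Finset.sum_congr rfl fun e _ => Finset.sum_congr rfl fun f _ => by ring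
  simp only [h]
  rw [integral_finsetSum _ fun e _ => integrable_finsetSum _ fun f _ =>
    (int_ZZe e f).const_mul _]
  rw [Finset.sum_div]
  refine Finset.sum_congr rfl fun e _ => ?_
  rw [integral_finsetSum _ fun f _ => (int_ZZe e f).const_mul _]
  simp only [integral_const_mul, cov_Z]
  simp
  ring

lemma charY_tendsto {n : ℕ} (s : Pr n → ℝ) :
    Tendsto (fun d : ℕ => (charFun ((cube1 n).map (Ys s)) ((Real.sqrt d)⁻¹)) ^ d) atTop
      (𝓝 (Complex.exp (-(((∑ e, s e ^ 2) / 180 : ℝ) : ℂ) / 2))) := by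
  set v : ℝ := (∑ e, s e ^ 2) / 180 with hv
  have hv0 : 0 ≤ v := by positivity
  rcases eq_or_lt_of_le hv0 with h | h
  · have hs : ∀ e, s e = 0 := by
      have : ∑ e, s e ^ 2 = 0 := by linarith
      rw [Finset.sum_eq_zero_iff_of_nonneg (fun e _ => sq_nonneg _)] at this
      intro e
      simpa using this e (Finset.mem_univ e)
    have hY : Ys s = fun _ => 0 := by
      funext u; simp [Ys, hs]
    rw [← h, hY]
    simp
  · have hq : Real.sqrt v ≠ 0 := (Real.sqrt_pos.2 h).ne'
    have key := tendsto_charFun_inv_sqrt_mul_pow (P := cube1 n)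
      (X := fun u => (Real.sqrt v)⁻¹ * Ys s u) ((Ys_meas s).const_mul _).aemeasurable
      (by rw [integral_const_mul, mean_Y, mul_zero])
      (by
        simp only [Pi.pow_apply, mul_pow]
        rw [integral_const_mul, sq_Y, ← hv, inv_pow, Real.sq_sqrt hv0]
        exact inv_mul_cancel₀ h.ne') (Real.sqrt v)
    have h2 : (((Real.sqrt v : ℝ) : ℂ)) ^ 2 = (v : ℂ) := by
      rw [← Complex.ofReal_pow, Real.sq_sqrt hv0]
    rw [h2] at key
    refine key.congr fun d => ?_
    rw [charFun_map_mul_comp (Ys_meas s).aemeasurable]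
    congr 2
    field_simp

noncomputable def Td (n d : ℕ) (c : ℝ) (ω : Fin n → Fin d → ℝ) : EuclideanSpace ℝ (Pr n) :=
  WithLp.toLp 2 fun e => (Real.sqrt d)⁻¹ * ∑ k, Ze e (fun i => ω i k) - c

lemma Td_meas (n d : ℕ) (c : ℝ) : Measurable (Td n d c) := by
  unfold Td
  refine (WithLp.measurable_toLp 2 _).comp (measurable_pi_lambda _ fun e => ?_)
  refine Measurable.sub_const (Measurable.const_mul ?_ _) _
  refine Finset.measurable_sum _ fun k _ => (Ze_meas e).comp ?_
  fun_prop

instance cubeLaw_prob (n d : ℕ) : IsProbabilityMeasure (cubeLaw n d) := by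
  unfold cubeLaw; infer_instance

lemma charFun_Td (n d : ℕ) (c : ℝ) (s : EuclideanSpace ℝ (Pr n)) :
    charFun ((cubeLaw n d).map (Td n d c)) s =
      Complex.exp (-(c * ∑ e, s e : ℝ) * Complex.I) *
        (charFun ((cube1 n).map (Ys fun e => s e)) ((Real.sqrt d)⁻¹)) ^ d := by
  rw [charFun_apply, integral_map (Td_meas n d c).aemeasurable (by fun_prop)]
  rw [charFun_apply_real, integral_map (Ys_meas _).aemeasurable (by fun_prop)]
  have h1 : ∀ ω : Fin n → Fin d → ℝ,
      Complex.exp ((inner ℝ (Td n d c ω) s : ℝ) * Complex.I) =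
      Complex.exp (-(c * ∑ e, s e : ℝ) * Complex.I) *
        (fun w : Fin d → Fin n → ℝ => ∏ k, Complex.exp
          (((Real.sqrt d)⁻¹ : ℝ) * (Ys (fun e => s e) (w k) : ℝ) * Complex.I))
          ((fun (ω : Fin n → Fin d → ℝ) k i => ω i k) ω) := by
    intro ω
    simp only
    rw [← Complex.exp_sum, ← Complex.exp_add]
    congr 1
    have : (inner ℝ (Td n d c ω) s : ℝ) = -(c * ∑ e, s e) +
        ∑ k, (Real.sqrt d)⁻¹ * Ys (fun e => s e) (fun i => ω i k) := by
      simp only [PiLp.inner_apply, Td, Ys]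
      simp only [RCLike.inner_apply, conj_trivial]
      simp only [mul_sub, Finset.sum_sub_distrib, Finset.mul_sum]
      rw [Finset.sum_comm (γ := Fin d)]
      rw [neg_add_eq_sub]
      congr 1
      · refine Finset.sum_congr rfl fun e _ => Finset.sum_congr rfl fun f _ => by ring
      · refine Finset.sum_congr rfl fun e _ => by ring
    rw [this]
    push_cast
    rw [add_mul, Finset.sum_mul]
  simp only [h1]
  rw [integral_const_mul]
  congr 1
  have hm : Measurable (fun (ω : Fin n → Fin d → ℝ) (k : Fin d) (i : Fin n) => ω i k) := by
    fun_prop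
  have hG : Measurable (fun w : Fin d → Fin n → ℝ => ∏ k, Complex.exp
          (((Real.sqrt d)⁻¹ : ℝ) * (Ys (fun e => s e) (w k) : ℝ) * Complex.I)) := by
    refine Finset.measurable_prod _ fun k _ => ?_
    have := (Ys_meas fun e => s e).comp (measurable_pi_apply (X := fun _ : Fin d => Fin n → ℝ) k)
    have h2 := Complex.measurable_ofReal.comp this
    simp only [Function.comp_def] at h2
    fun_prop
  rw [← integral_map (μ := cubeLaw n d) hm.aemeasurable hG.aestronglyMeasurable,
    transpose_cubeLaw]
  change ∫ w, _ ∂(Measure.pi fun _ : Fin d => cube1 n) = _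
  rw [integral_fintype_prod_eq_pow (ι := Fin d) (fun u : Fin n → ℝ => Complex.exp
          (((Real.sqrt d)⁻¹ : ℝ) * (Ys (fun e => s e) u : ℝ) * Complex.I)), Fintype.card_fin]

noncomputable def mu0 (n : ℕ) (t : ℝ) : Measure (EuclideanSpace ℝ (Pr n)) :=
  (Measure.pi fun _ : Pr n => gaussianReal (-t) (1/180 : NNReal)).map (WithLp.toLp 2)

instance mu0_prob (n : ℕ) (t : ℝ) : IsProbabilityMeasure (mu0 n t) :=
  Measure.isProbabilityMeasure_map (WithLp.measurable_toLp 2 _).aemeasurable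

lemma charFun_mu0 (n : ℕ) (t : ℝ) (s : EuclideanSpace ℝ (Pr n)) :
    charFun (mu0 n t) s = Complex.exp (-(t * ∑ e, s e : ℝ) * Complex.I) *
      Complex.exp (-(((∑ e, s e ^ 2) / 180 : ℝ) : ℂ) / 2) := by
  rw [mu0, charFun_pi]
  simp only [charFun_gaussianReal]
  rw [← Complex.exp_sum, ← Complex.exp_add]
  congr 1
  push_cast
  rw [Finset.sum_sub_distrib, sub_eq_add_neg]
  congr 1
  · rw [Finset.mul_sum, ← Finset.sum_neg_distrib, Finset.sum_mul]
    refine Finset.sum_congr rfl fun e _ => by ring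
  · rw [Finset.sum_div, neg_div, Finset.sum_div, ← Finset.sum_neg_distrib, ← Finset.sum_neg_distrib]
    refine Finset.sum_congr rfl fun e _ => by ring

def Aset {n : ℕ} (g : SimpleGraph (Fin n)) : Set (EuclideanSpace ℝ (Pr n)) :=
  {x | ∀ e : Pr n, x e ≤ 0 ↔ g.Adj e.1.1 e.1.2}

lemma frontier_Aset {n : ℕ} (g : SimpleGraph (Fin n)) :
    frontier (Aset g) ⊆ ⋃ e : Pr n, {x | x e = 0} := by
  intro x hx
  by_contra hne
  simp only [Set.mem_iUnion, Set.mem_ofPred_eq, not_exists] at hne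
  rw [frontier_eq_closure_inter_closure] at hx
  set U : Set (EuclideanSpace ℝ (Pr n)) := ⋂ e : Pr n, {y | 0 < x e * y e} with hU
  have hUo : IsOpen U := by
    refine isOpen_iInter_of_finite fun e => isOpen_lt continuous_const ?_
    fun_prop
  have hxU : x ∈ U := by
    simp only [hU, Set.mem_iInter, Set.mem_ofPred_eq]
    intro e
    exact mul_self_pos.2 (hne e)
  have hUA : ∀ y ∈ U, y ∈ Aset g ↔ x ∈ Aset g := by
    intro y hy
    simp only [hU, Set.mem_iInter, Set.mem_ofPred_eq] at hy
    simp only [Aset, Set.mem_ofPred_eq]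
    refine forall_congr' fun e => ?_
    have : y e ≤ 0 ↔ x e ≤ 0 := by
      have h1 := hy e
      constructor
      · intro h; by_contra hc; nlinarith
      · intro h; by_contra hc; nlinarith
    rw [this]
  obtain ⟨y, hyU, hyA⟩ := mem_closure_iff.1 hx.1 U hUo hxU
  obtain ⟨z, hzU, hzA⟩ := mem_closure_iff.1 hx.2 U hUo hxU
  exact hzA ((hUA z hzU).2 ((hUA y hyU).1 hyA))

lemma mu0_frontier {n : ℕ} (t : ℝ) (g : SimpleGraph (Fin n)) :
    mu0 n t (frontier (Aset g)) = 0 := by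
  refine measure_mono_null (frontier_Aset g) (measure_iUnion_null fun e => ?_)
  have hms : MeasurableSet {x : EuclideanSpace ℝ (Pr n) | x e = 0} :=
    (isClosed_eq (by fun_prop) continuous_const).measurableSet
  rw [mu0, Measure.map_apply (WithLp.measurable_toLp 2 _) hms]
  have := (measurePreserving_eval (fun _ : Pr n => gaussianReal (-t) (1/180 : NNReal)) e)
  have h0 := this.measure_preimage (s := {0}) (measurableSet_singleton _).nullMeasurableSet
  have : NullSingletonClass (gaussianReal (-t) (1/180 : NNReal)) := nullSingletonClass_gaussianReal (by norm_num)
  rw [measure_singleton] at h0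
  exact h0

lemma card_Pr {n : ℕ} (g : SimpleGraph (Fin n)) [DecidableRel g.Adj] :
    (Finset.univ.filter fun e : Pr n => g.Adj e.1.1 e.1.2).card = g.edgeFinset.card := by
  refine Finset.card_bij (fun e _ => s(e.1.1, e.1.2)) ?_ ?_ ?_
  · intro e he
    simpa using he
  · rintro ⟨⟨a, b⟩, h⟩ _ ⟨⟨c, d⟩, h'⟩ _ heq
    simp only [Sym2.eq_iff] at heq
    simp only at h h'
    rcases heq with ⟨rfl, rfl⟩ | ⟨rfl, rfl⟩
    · rfl
    · exact absurd h (not_lt.2 h'.le)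
  · intro x
    induction x with | _ a b
    intro hx
    have hab : g.Adj a b := by simpa using hx
    rcases lt_or_gt_of_ne hab.ne with h | h
    · exact ⟨⟨(a, b), h⟩, by simpa using hab, rfl⟩
    · exact ⟨⟨(b, a), h⟩, by simpa using hab.symm, Sym2.eq_swap⟩

lemma card_Pr_univ (n : ℕ) : Fintype.card (Pr n) = n * (n - 1) / 2 := by
  classical
  have h := card_Pr (⊤ : SimpleGraph (Fin n))
  rw [SimpleGraph.card_edgeFinset_top_eq_card_choose_two, Fintype.card_fin,
    Nat.choose_two_right] at h
  rw [← h, ← Finset.card_univ]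
  congr 1
  ext e
  simp [e.2.ne]

lemma gauss_Iic (t : ℝ) :
    gaussianReal (-t) (1/180 : NNReal) (Set.Iic 0) = gaussianReal 0 (1/180 : NNReal) (Set.Iic t) := by
  have := gaussianReal_map_sub_const (μ := 0) (v := (1/180 : NNReal)) t
  rw [zero_sub] at this
  rw [← this, Measure.map_apply (by fun_prop) measurableSet_Iic]
  congr 1
  ext x
  simp

lemma Aset_meas {n : ℕ} (g : SimpleGraph (Fin n)) : MeasurableSet (Aset g) := by
  classical
  have hA : Aset g = ⋂ e : Pr n, {x : EuclideanSpace ℝ (Pr n) | x e ≤ 0 ↔ g.Adj e.1.1 e.1.2} := by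
    ext x
    simp [Aset]
  rw [hA]
  refine MeasurableSet.iInter fun e => ?_
  have : Measurable fun x : EuclideanSpace ℝ (Pr n) => x e :=
    Continuous.measurable (by fun_prop)
  by_cases h : g.Adj e.1.1 e.1.2
  · simp only [h, iff_true]
    exact this measurableSet_Iic
  · simp only [h, iff_false]
    exact (this measurableSet_Iic).compl

lemma mu0_Aset {n : ℕ} (t : ℝ) (g : SimpleGraph (Fin n)) [DecidableRel g.Adj] :
    (mu0 n t (Aset g)).toReal = pbar t ^ g.edgeFinset.card *
        (1 - pbar t) ^ (n * (n - 1) / 2 - g.edgeFinset.card) := by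
  set B : Pr n → Set ℝ := fun e => if g.Adj e.1.1 e.1.2 then Set.Iic 0 else (Set.Iic 0)ᶜ with hB
  have hBm : ∀ e, MeasurableSet (B e) := by
    intro e
    simp only [hB]
    split_ifs
    · exact measurableSet_Iic
    · exact measurableSet_Iic.compl
  have hA : Aset g = ⋂ e, {x : EuclideanSpace ℝ (Pr n) | x e ∈ B e} := by
    ext x
    simp only [Aset, Set.mem_ofPred_eq, Set.mem_iInter]
    refine forall_congr' fun e => ?_
    simp only [hB]
    split_ifs with h <;> simp [h]
  have hAm := Aset_meas g
  rw [mu0, Measure.map_apply (WithLp.measurable_toLp 2 _) hAm]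
  have hpre : (WithLp.toLp 2 : (Pr n → ℝ) → EuclideanSpace ℝ (Pr n)) ⁻¹' Aset g
      = Set.univ.pi B := by
    rw [hA]; ext x; simp
  rw [hpre, Measure.pi_pi, ENNReal.toReal_prod]
  have hval : ∀ e, (gaussianReal (-t) (1/180 : NNReal) (B e)).toReal =
      if g.Adj e.1.1 e.1.2 then pbar t else 1 - pbar t := by
    intro e
    simp only [hB]
    split_ifs with h
    · rw [gauss_Iic]; rfl
    · rw [prob_compl_eq_one_sub measurableSet_Iic, ENNReal.toReal_sub_of_le prob_le_one (by simp),
        gauss_Iic]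
      rfl
  simp only [hval]
  rw [Finset.prod_ite, Finset.prod_const, Finset.prod_const, card_Pr]
  congr 2
  have := Finset.card_filter_add_card_filter_not (s := (Finset.univ : Finset (Pr n)))
    (fun e => g.Adj e.1.1 e.1.2)
  rw [card_Pr, Finset.card_univ, card_Pr_univ] at this
  omega

/-- The hard RGG on `n` i.i.d. uniform points in the `d`-dimensional torus, with connection
radius `r₀(d)` satisfying `(r₀(d)² − d/12)/√d → t`, converges in distribution to the
Erdős–Rényi ensemble `G(n, p̄(t))`: the probability of each labelled graph `g` with `k`
edges tends to `p̄(t)^k (1−p̄(t))^(n(n−1)/2−k)`. -/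
theorem stmt_13 (n : ℕ) (hn : 2 ≤ n) (t : ℝ) (r₀ : ℕ → ℝ)
    (hpos : ∀ d, 0 < r₀ d)
    (ht : Tendsto (fun d : ℕ => (r₀ d ^ 2 - d / 12) / Real.sqrt d) atTop (𝓝 t))
    (g : SimpleGraph (Fin n)) [DecidableRel g.Adj] :
    Tendsto
      (fun d : ℕ =>
        (cubeLaw n d {ω | ∀ i j : Fin n, i < j →
            (torusDist d (ω i) (ω j) ≤ r₀ d ↔ g.Adj i j)}).toReal)
      atTop
      (𝓝 (pbar t ^ g.edgeFinset.card *
        (1 - pbar t) ^ (n * (n - 1) / 2 - g.edgeFinset.card))) := by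
  set c : ℕ → ℝ := fun d => (r₀ d ^ 2 - d / 12) / Real.sqrt d with hc
  let μs : ℕ → ProbabilityMeasure (EuclideanSpace ℝ (Pr n)) := fun d =>
    ⟨(cubeLaw n d).map (Td n d (c d)),
      Measure.isProbabilityMeasure_map (Td_meas n d (c d)).aemeasurable⟩
  let μ0 : ProbabilityMeasure (EuclideanSpace ℝ (Pr n)) := ⟨mu0 n t, mu0_prob n t⟩
  have hlim : Tendsto μs atTop (𝓝 μ0) := by
    refine ProbabilityMeasure.tendsto_of_tendsto_charFun fun s => ?_
    change Tendsto (fun d => charFun ((cubeLaw n d).map (Td n d (c d))) s) atTop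
      (𝓝 (charFun (mu0 n t) s))
    rw [charFun_mu0]
    simp only [charFun_Td]
    refine Tendsto.mul ?_ (charY_tendsto fun e => s e)
    have hcont : Continuous fun x : ℝ =>
        Complex.exp (-((x * ∑ e, s e : ℝ) : ℂ) * Complex.I) := by fun_prop
    exact (hcont.tendsto t).comp ht
  have h1 := ProbabilityMeasure.tendsto_measure_of_null_frontier_of_tendsto' hlim
    (E := Aset g) (mu0_frontier t g)
  have h2 := (ENNReal.tendsto_toReal (measure_ne_top (mu0 n t) (Aset g))).comp h1
  rw [mu0_Aset] at h2
  refine h2.congr' ?_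
  filter_upwards [eventually_gt_atTop 0] with d hd
  simp only [Function.comp_apply]
  change ((cubeLaw n d).map (Td n d (c d)) (Aset g)).toReal = _
  rw [Measure.map_apply (Td_meas n d (c d)) (Aset_meas g)]
  congr 2
  have hsd : 0 < Real.sqrt d := Real.sqrt_pos.2 (by exact_mod_cast hd)
  have key : ∀ (ω : Fin n → Fin d → ℝ) (e : Pr n),
      (Td n d (c d) ω e ≤ 0 ↔ torusDist d (ω e.1.1) (ω e.1.2) ≤ r₀ d) := by
    intro ω e
    rw [torusDist, Real.sqrt_le_left (hpos d).le]
    simp only [Td, Ze, Zc, hc, Finset.sum_sub_distrib, Finset.sum_const, Finset.card_univ,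
      Fintype.card_fin, nsmul_eq_mul]
    rw [sub_nonpos, inv_mul_eq_div, div_le_div_iff_of_pos_right hsd]
    constructor <;> intro h <;> linarith
  ext ω
  simp only [Set.mem_preimage, Aset, Set.mem_ofPred_eq, key]
  constructor
  · intro h i j hij
    exact h ⟨(i, j), hij⟩
  · intro h e
    exact h _ _ e.2
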